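/- arXiv:2510.23005 — 3 statements merged into one kernel-verified Lean document; each statement's English description precedes it below -/
import Mathlib

section
/- There exists a continuous map r : Δ* → Δ such that: (1) r(x) = x for every x ∈ Δ; (2) for every 0 ≤ k ≤ n−2 and every choice of indices 1 ≤ i_1 < ⋯ < i_{k+1} ≤ n−1, one has r(Δ*_k(i_1,…,i_{k+1})) ⊆ Δ_k(i_1,…,i_{k+1}) and r(Δ*_k(i_1,…,i_{k+1}) \ Δ_k(i_1,…,i_{k+1})) ⊆ ∂Δ_k(i_1,…,i_{k+1}). -/
/-!
The retraction replaces `λ` by its running maxima `M_i = max (λ_1, …, λ_i)` and rescales the result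
so that `M_1 + ⋯ + M_{n-2} + 2 M_{n-1}` becomes `1` again.  Since `M ≥ λ` coordinatewise, that weighted
sum is at least `1` on `Δ*`, so the rescaling is continuous; `M` is increasing, and `M = λ` if `λ`
already is.

For the faces, note that `Δ*_k(i_1,…,i_{k+1})` is cut out by `λ_m = 0` for `m < i_1` together with
`λ_{m+1} = λ_m` for those `m ≥ i_1` such that `m + 1` is none of the `i_j` (`mem_deltaStarFace_iff`).
Both kinds of equations pass to `M`, because `M_{m+1} = max (M_m, λ_{m+1})`.  Moreover, a point of this
face outside `Δ` has a descent `λ_{m+1} < λ_m`, which can only occur at `m + 1 = i_j` with `j ≥ 2`;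
then `M_{m+1} = M_m`, so the image lies in the face with `i_j` omitted.
-/

open Set

noncomputable section

/-- The `i`-th coordinate (1-based, `1 ≤ i ≤ n-1`) of a point of `ℝ^{n-1}`. -/
def coord (n : ℕ) (x : EuclideanSpace ℝ (Fin (n - 1))) (i : ℕ) : ℝ :=
  if h : i - 1 < n - 1 then x ⟨i - 1, h⟩ else 0

/-- `Δ* = {λ ∈ [0,1]^{n-1} : λ_1 + ⋯ + λ_{n-2} + 2 λ_{n-1} = 1}`. -/
def deltaStar (n : ℕ) : Set (EuclideanSpace ℝ (Fin (n - 1))) :=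
  {x | (∀ i, 0 ≤ x i ∧ x i ≤ 1) ∧ (∑ i, x i) + coord n x (n - 1) = 1}

/-- `Δ = {λ ∈ Δ* : λ_1 ≤ ⋯ ≤ λ_{n-1}}`. -/
def deltaSet (n : ℕ) : Set (EuclideanSpace ℝ (Fin (n - 1))) :=
  {x ∈ deltaStar n | ∀ i j : Fin (n - 1), i ≤ j → x i ≤ x j}

/-- A valid index choice `1 ≤ i_1 < i_2 < ⋯ < i_{k+1} ≤ n-1`, recorded together with the
conventional last entry `i_{k+2} = n`, as a strictly monotone `ι : Fin (k+2) → ℕ`. -/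
def FaceIndices (n k : ℕ) (ι : Fin (k + 2) → ℕ) : Prop :=
  StrictMono ι ∧ 1 ≤ ι 0 ∧ ι (Fin.last (k + 1)) = n

/-- `Δ*_k(i_1,…,i_{k+1})`: points of `Δ*` with `λ_{i_j} = ⋯ = λ_{i_{j+1}-1}` for all
`j = 1,…,k+1` (with `i_{k+2} = n`), and `λ_1 = ⋯ = λ_{i_1 - 1} = 0` when `i_1 > 1`. -/
def deltaStarFace (n k : ℕ) (ι : Fin (k + 2) → ℕ) : Set (EuclideanSpace ℝ (Fin (n - 1))) :=
  {x ∈ deltaStar n |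
    (∀ j : Fin (k + 1), ∀ m : ℕ, ι j.castSucc ≤ m → m < ι j.succ →
      coord n x m = coord n x (ι j.castSucc)) ∧
    ∀ m : ℕ, 1 ≤ m → m < ι 0 → coord n x m = 0}

/-- `Δ_k(i_1,…,i_{k+1}) = Δ*_k(i_1,…,i_{k+1}) ∩ Δ`. -/
def deltaFace (n k : ℕ) (ι : Fin (k + 2) → ℕ) : Set (EuclideanSpace ℝ (Fin (n - 1))) :=
  deltaStarFace n k ι ∩ deltaSet n

/-- `∂Δ_k(i_1,…,i_{k+1}) = ⋃_{j=1}^{k+1} Δ_{k-1}(i_1,…,î_j,…,i_{k+1})`,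
the empty union when `k = 0`. -/
def deltaFaceBoundary (n : ℕ) :
    (k : ℕ) → (Fin (k + 2) → ℕ) → Set (EuclideanSpace ℝ (Fin (n - 1)))
  | 0, _ => ∅
  | k + 1, ι => ⋃ j : Fin (k + 2), deltaFace n k (ι ∘ Fin.succAbove j.castSucc)

lemma coord_succ (n : ℕ) (x : EuclideanSpace ℝ (Fin (n - 1))) (i : Fin (n - 1)) :
    coord n x (i + 1) = x i := by
  simp [coord]

/-- The vector of running maxima of `x`. -/
def runMax (n : ℕ) (x : EuclideanSpace ℝ (Fin (n - 1))) : EuclideanSpace ℝ (Fin (n - 1)) :=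
  WithLp.toLp 2 fun i => partialSups (fun m => coord n x (m + 1)) (i : ℕ)

/-- The linear form `x_1 + ⋯ + x_{n-2} + 2 x_{n-1}` defining `Δ*`. -/
def weight (n : ℕ) (x : EuclideanSpace ℝ (Fin (n - 1))) : ℝ :=
  (∑ i, x i) + coord n x (n - 1)

/-- The retraction of `Δ*` onto `Δ`: running maxima, rescaled to weight `1`. -/
def retr (n : ℕ) (x : EuclideanSpace ℝ (Fin (n - 1))) : EuclideanSpace ℝ (Fin (n - 1)) :=
  (weight n (runMax n x))⁻¹ • runMax n x

lemma coord_smul (n : ℕ) (c : ℝ) (x : EuclideanSpace ℝ (Fin (n - 1))) (i : ℕ) :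
    coord n (c • x) i = c * coord n x i := by
  unfold coord; split_ifs <;> simp

lemma weight_smul (n : ℕ) (c : ℝ) (x : EuclideanSpace ℝ (Fin (n - 1))) :
    weight n (c • x) = c * weight n x := by
  simp [weight, coord_smul, mul_add, Finset.mul_sum]

lemma coord_runMax (n : ℕ) (x : EuclideanSpace ℝ (Fin (n - 1))) (m : ℕ) (h : m + 1 < n) :
    coord n (runMax n x) (m + 1) = partialSups (fun m => coord n x (m + 1)) m := by
  have : m < n - 1 := by omega
  simp [coord, runMax, this]

lemma coord_runMax_step (n : ℕ) (x : EuclideanSpace ℝ (Fin (n - 1))) (m : ℕ) (h1 : 1 ≤ m)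
    (h : m + 1 < n) :
    coord n (runMax n x) (m + 1) = max (coord n (runMax n x) m) (coord n x (m + 1)) := by
  obtain ⟨p, rfl⟩ : ∃ p, m = p + 1 := ⟨m - 1, by omega⟩
  rw [coord_runMax n x (p + 1) h, coord_runMax n x p (by omega), partialSups_add_one]

lemma coord_le_runMax (n : ℕ) (x : EuclideanSpace ℝ (Fin (n - 1))) (m : ℕ) (h1 : 1 ≤ m)
    (h : m < n) : coord n x m ≤ coord n (runMax n x) m := by
  obtain ⟨p, rfl⟩ : ∃ p, m = p + 1 := ⟨m - 1, by omega⟩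
  rw [coord_runMax n x p h]
  exact le_partialSups (fun m => coord n x (m + 1)) p

lemma le_runMax (n : ℕ) (x : EuclideanSpace ℝ (Fin (n - 1))) (i : Fin (n - 1)) :
    x i ≤ runMax n x i := by
  have := coord_le_runMax n x (i + 1) (by omega) (by omega)
  rwa [coord_succ, coord_succ] at this

lemma runMax_mono (n : ℕ) (x : EuclideanSpace ℝ (Fin (n - 1))) (i j : Fin (n - 1)) (h : i ≤ j) :
    runMax n x i ≤ runMax n x j :=
  (partialSups (fun m => coord n x (m + 1))).monotone h

lemma runMax_eq_self (n : ℕ) {x : EuclideanSpace ℝ (Fin (n - 1))} (hx : x ∈ deltaSet n) :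
    runMax n x = x := by
  ext i
  refine le_antisymm ?_ (le_runMax n x i)
  refine partialSups_le _ _ _ fun m hm => ?_
  have hmi : m < n - 1 := by omega
  have := hx.2 ⟨m, hmi⟩ i hm
  rwa [← coord_succ n x ⟨m, hmi⟩] at this

lemma one_le_weight (n : ℕ) (hn : 3 ≤ n) {x : EuclideanSpace ℝ (Fin (n - 1))}
    (hx : x ∈ deltaStar n) : 1 ≤ weight n (runMax n x) := by
  rw [← hx.2]
  exact add_le_add (Finset.sum_le_sum fun i _ => le_runMax n x i)
    (coord_le_runMax n x (n - 1) (by omega) (by omega))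

lemma continuous_coord (n i : ℕ) : Continuous fun x => coord n x i := by
  unfold coord
  split_ifs <;> fun_prop

lemma continuous_runMax (n : ℕ) : Continuous (runMax n) := by
  refine (PiLp.continuous_toLp 2 _).comp (continuous_pi fun i => ?_)
  exact Continuous.partialSups_apply fun k _ => continuous_coord n (k + 1)

lemma continuous_weight (n : ℕ) : Continuous (weight n) := by
  have := continuous_coord n (n - 1)
  unfold weight
  fun_prop

lemma retr_mem (n : ℕ) (hn : 3 ≤ n) {x : EuclideanSpace ℝ (Fin (n - 1))}
    (hx : x ∈ deltaStar n) : retr n x ∈ deltaSet n := by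
  have hw := one_le_weight n hn hx
  have hc : 0 ≤ (weight n (runMax n x))⁻¹ := by positivity
  have h0 : ∀ i, 0 ≤ retr n x i := fun i =>
    mul_nonneg hc ((hx.1 i).1.trans (le_runMax n x i))
  have hs : weight n (retr n x) = 1 := by
    rw [retr, weight_smul]
    exact inv_mul_cancel₀ (by positivity)
  refine ⟨⟨fun i => ⟨h0 i, ?_⟩, hs⟩, fun i j hij =>
    mul_le_mul_of_nonneg_left (runMax_mono n x i j hij) hc⟩
  have h1 : retr n x i ≤ ∑ i, retr n x i :=
    Finset.single_le_sum (f := fun i => retr n x i) (fun i _ => h0 i) (Finset.mem_univ i)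
  have h2 : 0 ≤ coord n (retr n x) (n - 1) := by
    unfold coord; split_ifs
    exacts [h0 _, le_rfl]
  unfold weight at hs
  linarith

/-- Faces described by equalities of consecutive coordinates: instead of the blocks, only the set of
indices at which a jump is allowed enters. -/
lemma mem_deltaStarFace_iff (n k : ℕ) (ι : Fin (k + 2) → ℕ) (hι : FaceIndices n k ι)
    (x : EuclideanSpace ℝ (Fin (n - 1))) :
    x ∈ deltaStarFace n k ι ↔ x ∈ deltaStar n ∧
      (∀ m, ι 0 ≤ m → m + 1 < n → m + 1 ∉ Set.range ι → coord n x (m + 1) = coord n x m) ∧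
      ∀ m : ℕ, 1 ≤ m → m < ι 0 → coord n x m = 0 := by
  obtain ⟨hmono, -, hlast⟩ := hι
  refine and_congr_right fun _ => and_congr_left fun _ => ⟨fun h m hm hmn hr => ?_,
    fun h j m hjm hm => ?_⟩
  · obtain ⟨j, hj1, hj2⟩ : ∃ j : Fin (k + 1), ι j.castSucc ≤ m ∧ m < ι j.succ := by
      by_contra! hcon
      have : ∀ j : Fin (k + 2), ι j ≤ m := Fin.induction hm hcon
      have := this (Fin.last (k + 1))
      omega
    have hne : m + 1 ≠ ι j.succ := fun e => hr ⟨_, e.symm⟩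
    rw [h j (m + 1) (by omega) (by omega), h j m hj1 hj2]
  · induction m, hjm using Nat.le_induction with
    | base => rfl
    | succ m hjm ih =>
      rw [← ih (by omega)]
      refine h m ((hmono.monotone (Fin.zero_le _)).trans hjm) ?_ ?_
      · exact hm.trans_le (hlast ▸ hmono.monotone (Fin.le_last _))
      · rintro ⟨l, hl⟩
        have h1 : j.castSucc < l := hmono.lt_iff_lt.1 (by omega)
        have h2 : l < j.succ := hmono.lt_iff_lt.1 (by omega)
        simp only [Fin.lt_def, Fin.val_castSucc, Fin.val_succ] at h1 h2
        omega

lemma coord_nonneg (n : ℕ) {x : EuclideanSpace ℝ (Fin (n - 1))} (hx : x ∈ deltaStar n) (m : ℕ) :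
    0 ≤ coord n x m := by
  unfold coord; split_ifs
  exacts [(hx.1 _).1, le_rfl]

lemma mem_deltaSet_of_step (n : ℕ) {x : EuclideanSpace ℝ (Fin (n - 1))} (hx : x ∈ deltaStar n)
    (h : ∀ m, 1 ≤ m → m + 1 < n → coord n x m ≤ coord n x (m + 1)) : x ∈ deltaSet n := by
  refine ⟨hx, fun i j hij => ?_⟩
  have key : ∀ b, (i : ℕ) ≤ b → b + 1 < n → coord n x (i + 1) ≤ coord n x (b + 1) := by
    intro b hb
    induction b, hb using Nat.le_induction with
    | base => exact fun _ => le_rfl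
    | succ b hb ih => exact fun hbn => (ih (by omega)).trans (h _ (by omega) hbn)
  have := key j hij (by omega)
  rwa [coord_succ, coord_succ] at this

/-- A coordinate of `x` not exceeding its predecessor produces equal coordinates in `retr n x`. -/
lemma coord_retr_eq (n : ℕ) (x : EuclideanSpace ℝ (Fin (n - 1))) (m : ℕ) (h1 : 1 ≤ m)
    (hmn : m + 1 < n) (h : coord n x (m + 1) ≤ coord n x m) :
    coord n (retr n x) (m + 1) = coord n (retr n x) m := by
  rw [retr, coord_smul, coord_smul, coord_runMax_step n x m h1 hmn,
    max_eq_left (h.trans (coord_le_runMax n x m h1 (by omega)))]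

lemma coord_retr_eq_zero (n : ℕ) (x : EuclideanSpace ℝ (Fin (n - 1))) (N : ℕ)
    (h : ∀ m, 1 ≤ m → m < N → coord n x m = 0) (m : ℕ) (hm : 1 ≤ m) (hmN : m < N) (hmn : m < n) :
    coord n (retr n x) m = 0 := by
  suffices coord n (runMax n x) m = 0 by rw [retr, coord_smul, this, mul_zero]
  induction m, hm using Nat.le_induction with
  | base =>
    rw [show 1 = 0 + 1 from rfl, coord_runMax n x 0 hmn, partialSups_zero]
    exact h 1 le_rfl hmN
  | succ m hm ih =>
    rw [coord_runMax_step n x m hm hmn, ih (by omega) (by omega), h (m + 1) (by omega) hmN, max_self]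

/-- Merging two adjacent blocks: a point of a face whose coordinates agree across the jump at
`ι j` lies in the face with `ι j` omitted. -/
lemma mem_face_omit (n k : ℕ) (ι : Fin (k + 3) → ℕ) (hι : FaceIndices n (k + 1) ι)
    (y : EuclideanSpace ℝ (Fin (n - 1))) (hy : y ∈ deltaStarFace n (k + 1) ι)
    (j : Fin (k + 3)) (hj0 : j ≠ 0) (hjl : j ≠ Fin.last _) (m : ℕ) (hm : ι j = m + 1)
    (heq : coord n y (m + 1) = coord n y m) :
    y ∈ deltaStarFace n k (ι ∘ Fin.succAbove j) := by
  have hz : (ι ∘ Fin.succAbove j) 0 = ι 0 := by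
    simp [Fin.succAbove_ne_zero_zero hj0]
  have hl : (ι ∘ Fin.succAbove j) (Fin.last _) = ι (Fin.last _) := by
    simp [Fin.succAbove_ne_last_last hjl]
  have hι' : FaceIndices n k (ι ∘ Fin.succAbove j) :=
    ⟨hι.1.comp (Fin.strictMono_succAbove j), hz ▸ hι.2.1, hl.trans hι.2.2⟩
  obtain ⟨h1, h2, h3⟩ := (mem_deltaStarFace_iff n _ ι hι y).1 hy
  refine (mem_deltaStarFace_iff n _ _ hι' y).2 ⟨h1, fun p hp hpn hr => ?_, by rwa [hz]⟩
  rw [hz] at hp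
  by_cases hpm : p = m
  · rw [hpm, heq]
  refine h2 p hp hpn ?_
  rintro ⟨l, hlp⟩
  have hlj : l ≠ j := by rintro rfl; omega
  obtain ⟨z, rfl⟩ := Fin.exists_succAbove_eq hlj
  exact hr ⟨z, hlp⟩

/-- There exists a continuous map `r : Δ* → Δ` such that `r(x) = x` for `x ∈ Δ`, and for every
`0 ≤ k ≤ n-2` and indices `1 ≤ i_1 < ⋯ < i_{k+1} ≤ n-1` one has
`r(Δ*_k(i_1,…,i_{k+1})) ⊆ Δ_k(i_1,…,i_{k+1})` and
`r(Δ*_k(i_1,…,i_{k+1}) \ Δ_k(i_1,…,i_{k+1})) ⊆ ∂Δ_k(i_1,…,i_{k+1})`. -/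
theorem exists_contraction (n : ℕ) (hn : 3 ≤ n) :
    ∃ r : EuclideanSpace ℝ (Fin (n - 1)) → EuclideanSpace ℝ (Fin (n - 1)),
      ContinuousOn r (deltaStar n) ∧
      Set.MapsTo r (deltaStar n) (deltaSet n) ∧
      (∀ x ∈ deltaSet n, r x = x) ∧
      ∀ (k : ℕ), k ≤ n - 2 → ∀ ι : Fin (k + 2) → ℕ, FaceIndices n k ι →
        r '' deltaStarFace n k ι ⊆ deltaFace n k ι ∧
        r '' (deltaStarFace n k ι \ deltaFace n k ι) ⊆ deltaFaceBoundary n k ι := by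
  refine ⟨retr n, ?_, fun x hx => retr_mem n hn hx, fun x hx => ?_, ?_⟩
  · have hw : ContinuousOn (fun x => weight n (runMax n x)) (deltaStar n) :=
      ((continuous_weight n).comp (continuous_runMax n)).continuousOn
    refine (hw.inv₀ fun x hx => ?_).smul (continuous_runMax n).continuousOn
    have := one_le_weight n hn hx
    positivity
  · have : weight n x = 1 := hx.1.2
    rw [retr, runMax_eq_self n hx, this, inv_one, one_smul]
  intro k _ ι hι
  have hface : ∀ x ∈ deltaStarFace n k ι, retr n x ∈ deltaStarFace n k ι := by
    intro x hx
    obtain ⟨h1, h2, h3⟩ := (mem_deltaStarFace_iff n k ι hι x).1 hx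
    have h0n : ι 0 ≤ n := hι.2.2 ▸ hι.1.monotone (Fin.zero_le _)
    refine (mem_deltaStarFace_iff n k ι hι _).2 ⟨(retr_mem n hn h1).1, fun m hm hmn hr => ?_,
      fun m hm hm0 => coord_retr_eq_zero n x (ι 0) h3 m hm hm0 (by omega)⟩
    exact coord_retr_eq n x m (hι.2.1.trans hm) hmn (h2 m hm hmn hr).le
  refine ⟨?_, ?_⟩
  · rintro _ ⟨x, hx, rfl⟩
    exact ⟨hface x hx, retr_mem n hn hx.1⟩
  rintro _ ⟨x, ⟨hx, hxn⟩, rfl⟩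
  obtain ⟨h1, h2, h3⟩ := (mem_deltaStarFace_iff n k ι hι x).1 hx
  obtain ⟨m, hm1, hmn, hlt⟩ : ∃ m, 1 ≤ m ∧ m + 1 < n ∧ coord n x (m + 1) < coord n x m := by
    by_contra! hcon
    exact hxn ⟨hx, mem_deltaSet_of_step n h1 hcon⟩
  have hm0 : ι 0 ≤ m := by
    by_contra! hlt0
    have := h3 m hm1 hlt0
    have := coord_nonneg n h1 (m + 1)
    linarith
  obtain ⟨j, hj⟩ : m + 1 ∈ Set.range ι := by
    by_contra hr
    exact hlt.ne (h2 m hm0 hmn hr)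
  have hj0 : j ≠ 0 := by rintro rfl; omega
  have hjl : j ≠ Fin.last _ := by
    rintro rfl
    have := hι.2.2
    omega
  cases k with
  | zero =>
    have := Fin.val_ne_of_ne hj0
    have := Fin.val_ne_of_ne hjl
    simp only [Fin.val_zero, Fin.val_last] at *
    omega
  | succ k =>
    refine Set.mem_iUnion.2 ⟨j.castPred hjl, ?_⟩
    rw [Fin.castSucc_castPred]
    exact ⟨mem_face_omit n k ι hι _ (hface x hx) j hj0 hjl m hj
      (coord_retr_eq n x m hm1 hmn hlt.le), retr_mem n hn h1⟩
end
end

section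
/- There exist a constant C > 0, a sequence of positive numbers ε_j → 0, and continuous maps Φ_j : Δ* → Δ* such that for every j: (1) Φ_j(x) = x for all x ∈ Δ* \ U(Σ, ε_j); (2) Φ_j(U(Σ, ε_j/C)) ⊆ Σ, Φ_j(x) = x for all x ∈ Σ, and sup_{x ∈ Δ*} |Φ_j(x) − x| ≤ C ε_j; (3) Φ_j(Δ*_k(i_1,…,i_{k+1})) ⊆ Δ*_k(i_1,…,i_{k+1}) for every 0 ≤ k ≤ n−2 and every choice of indices 1 ≤ i_1 < ⋯ < i_{k+1} ≤ n−1. -/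
/-!
Write `a` for the first and `b` for the last index, so that `Σ = {x ∈ Δ* | x a = 0}`. Given a scale
`η`, let `s = min (x a) (max 0 (2η - x a))`: this cut-off satisfies `0 ≤ s ≤ η`, equals `x a` when
`x a ≤ η`, and vanishes when `x a = 0` or `x a ≥ 2η`. The pushing map subtracts `s` from every
coordinate, truncates at `0`, and divides by the weighted sum
`W = y_1 + ⋯ + y_{n-2} + 2 y_{n-1}` of the result `y` to return to `Δ*`.

* The same function of one variable is applied to all coordinates, so equalities between
  coordinates survive; this preserves the faces with `i_1 = 1`. The faces with `i_1 > 1` lie in `Σ`,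
  where the map is the identity because `s = 0`.
* If `x a ≤ η`, the first coordinate is sent to `0`, i.e. `x` is pushed into `Σ`.
* `1 - W ≤ n s`, so for `n η ≤ 1 / 2` the map is well defined and moves each coordinate by at most
  `(n + 1) s`.
* `x a ≤ dist (x, Σ) ≤ 2 x a`: the first inequality because `x a` is `1`-Lipschitz, the second by
  moving the mass `x a` to the last coordinate. This translates conditions on `x a` into conditions
  on the distance to `Σ`, with `ε = 4η`.
-/

open Set

noncomputable section

/-- `Σ := Δ*_{n-3}(2,3,…,n-1)`, i.e. the face of `Δ*` with index sequence `i_j = j + 1`. -/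
def sigmaFace (n : ℕ) : Set (EuclideanSpace ℝ (Fin (n - 1))) :=
  deltaStarFace n (n - 3) (fun j => (j : ℕ) + 2)

/-- `U(V, r) = {x ∈ Δ* : dist(x, V) < r}`, the open `r`-neighborhood of `V` in `Δ*`. -/
def deltaStarNbhd (n : ℕ) (V : Set (EuclideanSpace ℝ (Fin (n - 1)))) (r : ℝ) :
    Set (EuclideanSpace ℝ (Fin (n - 1))) :=
  {x ∈ deltaStar n | Metric.infDist x V < r}

/-! ### The cut-off and the pushing map -/

/-- The weighted sum `x_1 + ⋯ + x_{n-2} + 2 x_{n-1}` that equals `1` on `Δ*`. -/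
def wsum (n : ℕ) (x : EuclideanSpace ℝ (Fin (n - 1))) : ℝ := (∑ i, x i) + coord n x (n - 1)

/-- The amount subtracted from each coordinate at scale `η`, as a function of the first
coordinate `t`. -/
def cut (η t : ℝ) : ℝ := min t (max 0 (2 * η - t))

/-- Subtraction of `cut η x_1` from every coordinate of `x`, truncated at `0`. -/
def shrink (n : ℕ) (η : ℝ) (x : EuclideanSpace ℝ (Fin (n - 1))) :
    EuclideanSpace ℝ (Fin (n - 1)) :=
  WithLp.toLp 2 fun i => max (x i - cut η (coord n x 1)) 0

/-- The pushing map at scale `η`: `shrink`, rescaled to weighted sum `1`. -/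
def push (n : ℕ) (η : ℝ) (x : EuclideanSpace ℝ (Fin (n - 1))) :
    EuclideanSpace ℝ (Fin (n - 1)) :=
  (wsum n (shrink n η x))⁻¹ • shrink n η x

lemma coord_of_lt {n : ℕ} (x : EuclideanSpace ℝ (Fin (n - 1))) {i : ℕ} (h : i - 1 < n - 1) :
    coord n x i = x ⟨i - 1, h⟩ := dif_pos h

lemma cut_nonneg {η t : ℝ} (ht : 0 ≤ t) : 0 ≤ cut η t := le_min ht (le_max_left _ _)

lemma cut_le {η t : ℝ} (hη : 0 ≤ η) : cut η t ≤ η := by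
  unfold cut
  rcases le_total t η with h | h
  · exact (min_le_left _ _).trans h
  · exact (min_le_right _ _).trans (max_le hη (by linarith))

lemma cut_zero (η : ℝ) : cut η 0 = 0 := by
  unfold cut
  exact min_eq_left (le_max_left _ _)

lemma cut_of_ge {η t : ℝ} (ht : 0 ≤ t) (h : 2 * η ≤ t) : cut η t = 0 := by
  unfold cut
  rw [max_eq_left (by linarith), min_eq_right ht]

lemma cut_of_le {η t : ℝ} (h : t ≤ η) : cut η t = t := by
  unfold cut
  exact min_eq_left (le_max_of_le_right (by linarith))

lemma coord_mem {n : ℕ} {x : EuclideanSpace ℝ (Fin (n - 1))} (hx : x ∈ deltaStar n) (i : ℕ) :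
    0 ≤ coord n x i := by
  unfold coord
  split_ifs
  · exact (hx.1 _).1
  · exact le_rfl

lemma mem_deltaStar_iff {n : ℕ} {x : EuclideanSpace ℝ (Fin (n - 1))} :
    x ∈ deltaStar n ↔ (∀ i, 0 ≤ x i) ∧ wsum n x = 1 := by
  refine ⟨fun h => ⟨fun i => (h.1 i).1, h.2⟩, fun h => ⟨fun i => ⟨h.1 i, ?_⟩, h.2⟩⟩
  have h1 : x i ≤ ∑ j, x j := Finset.single_le_sum (fun j _ => h.1 j) (Finset.mem_univ i)
  have h2 : 0 ≤ coord n x (n - 1) := by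
    unfold coord
    split_ifs
    · exact h.1 _
    · exact le_rfl
  have h3 : (∑ j, x j) + coord n x (n - 1) = 1 := h.2
  linarith

lemma mem_sigmaFace_iff {n : ℕ} {x : EuclideanSpace ℝ (Fin (n - 1))} :
    x ∈ sigmaFace n ↔ x ∈ deltaStar n ∧ coord n x 1 = 0 := by
  refine ⟨fun h => ⟨h.1, h.2.2 1 le_rfl (by simp)⟩, fun h => ⟨h.1, fun j m h1 h2 => ?_,
    fun m h1 h2 => ?_⟩⟩
  · congr 1
    simp at h1 h2 ⊢
    omega
  · have : m = 1 := by simp at h2; omega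
    rw [this]; exact h.2

lemma shrink_apply {n : ℕ} (η : ℝ) (x : EuclideanSpace ℝ (Fin (n - 1))) (i : Fin (n - 1)) :
    shrink n η x i = max (x i - cut η (coord n x 1)) 0 := rfl

lemma shrink_le {n : ℕ} {η : ℝ} {x : EuclideanSpace ℝ (Fin (n - 1))} (hx : x ∈ deltaStar n)
    (i : Fin (n - 1)) : shrink n η x i ≤ x i := by
  rw [shrink_apply]
  have := cut_nonneg (η := η) (coord_mem hx 1)
  exact max_le (by linarith) (hx.1 i).1

lemma le_shrink {n : ℕ} (η : ℝ) (x : EuclideanSpace ℝ (Fin (n - 1))) (i : Fin (n - 1)) :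
    x i - cut η (coord n x 1) ≤ shrink n η x i := le_max_left _ _

lemma wsum_eq {n : ℕ} (hn : 3 ≤ n) (x : EuclideanSpace ℝ (Fin (n - 1))) :
    wsum n x = (∑ i, x i) + x ⟨n - 1 - 1, by omega⟩ := by
  rw [wsum, coord_of_lt x (by omega)]

lemma wsum_shrink_le {n : ℕ} (hn : 3 ≤ n) {η : ℝ} {x : EuclideanSpace ℝ (Fin (n - 1))}
    (hx : x ∈ deltaStar n) : wsum n (shrink n η x) ≤ 1 := by
  rw [← (mem_deltaStar_iff.1 hx).2, wsum_eq hn, wsum_eq hn]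
  exact add_le_add (Finset.sum_le_sum fun i _ => shrink_le hx i) (shrink_le hx _)

lemma le_wsum_shrink {n : ℕ} (hn : 3 ≤ n) {η : ℝ} {x : EuclideanSpace ℝ (Fin (n - 1))}
    (hx : x ∈ deltaStar n) : 1 - n * cut η (coord n x 1) ≤ wsum n (shrink n η x) := by
  rw [← (mem_deltaStar_iff.1 hx).2, wsum_eq hn, wsum_eq hn]
  have h1 : ∑ i, (x i - cut η (coord n x 1)) ≤ ∑ i, shrink n η x i :=
    Finset.sum_le_sum fun i _ => le_shrink η x i
  have h2 := le_shrink η x ⟨n - 1 - 1, by omega⟩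
  rw [Finset.sum_sub_distrib] at h1
  simp only [Finset.sum_const, Finset.card_univ, Fintype.card_fin, nsmul_eq_mul,
    Nat.cast_sub (show 1 ≤ n by omega), Nat.cast_one] at h1
  linarith

lemma wsum_shrink_pos {n : ℕ} (hn : 3 ≤ n) {η : ℝ} (hη : 0 ≤ η) (hη' : n * η ≤ 1 / 2)
    {x : EuclideanSpace ℝ (Fin (n - 1))} (hx : x ∈ deltaStar n) : 0 < wsum n (shrink n η x) := by
  have h1 := le_wsum_shrink (η := η) hn hx
  have h2 : n * cut η (coord n x 1) ≤ n * η :=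
    mul_le_mul_of_nonneg_left (cut_le hη) (Nat.cast_nonneg n)
  linarith

lemma push_apply {n : ℕ} (η : ℝ) (x : EuclideanSpace ℝ (Fin (n - 1))) (i : Fin (n - 1)) :
    push n η x i = (wsum n (shrink n η x))⁻¹ * shrink n η x i := rfl

lemma wsum_smul {n : ℕ} (hn : 3 ≤ n) (c : ℝ) (x : EuclideanSpace ℝ (Fin (n - 1))) :
    wsum n (c • x) = c * wsum n x := by
  rw [wsum_eq hn, wsum_eq hn]
  simp [Finset.mul_sum, mul_add]

lemma push_mem {n : ℕ} (hn : 3 ≤ n) {η : ℝ} (hη : 0 ≤ η) (hη' : n * η ≤ 1 / 2)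
    {x : EuclideanSpace ℝ (Fin (n - 1))} (hx : x ∈ deltaStar n) : push n η x ∈ deltaStar n := by
  have hW := wsum_shrink_pos hn hη hη' hx
  refine mem_deltaStar_iff.2 ⟨fun i => ?_, ?_⟩
  · rw [push_apply]
    exact mul_nonneg (inv_nonneg.2 hW.le) (le_max_right _ _)
  · rw [push, wsum_smul hn, inv_mul_cancel₀ hW.ne']

/-- Where the cut-off vanishes, the pushing map is the identity. -/
lemma push_eq_self {n : ℕ} {η : ℝ} {x : EuclideanSpace ℝ (Fin (n - 1))} (hx : x ∈ deltaStar n)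
    (h : cut η (coord n x 1) = 0) : push n η x = x := by
  have h1 : shrink n η x = x := by
    ext i
    rw [shrink_apply, h, sub_zero, max_eq_left (hx.1 i).1]
  rw [push, h1, (mem_deltaStar_iff.1 hx).2, inv_one, one_smul]

lemma push_mem_sigmaFace {n : ℕ} (hn : 3 ≤ n) {η : ℝ} (hη : 0 ≤ η) (hη' : n * η ≤ 1 / 2)
    {x : EuclideanSpace ℝ (Fin (n - 1))} (hx : x ∈ deltaStar n) (h : coord n x 1 ≤ η) :
    push n η x ∈ sigmaFace n := by
  refine mem_sigmaFace_iff.2 ⟨push_mem hn hη hη' hx, ?_⟩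
  rw [coord_of_lt _ (by omega), push_apply, shrink_apply, cut_of_le h, coord_of_lt x (by omega)]
  simp

/-! ### Continuity and displacement -/

lemma continuous_wsum (n : ℕ) : Continuous (wsum n) := by
  have := continuous_coord n (n - 1)
  unfold wsum
  fun_prop

lemma continuous_shrink (n : ℕ) (η : ℝ) : Continuous (shrink n η) := by
  have := continuous_coord n 1
  unfold shrink cut
  fun_prop

lemma continuousOn_push {n : ℕ} (hn : 3 ≤ n) {η : ℝ} (hη : 0 ≤ η) (hη' : n * η ≤ 1 / 2) :
    ContinuousOn (push n η) (deltaStar n) := by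
  have h1 := continuous_shrink n η
  have h2 : Continuous fun x => wsum n (shrink n η x) := (continuous_wsum n).comp h1
  exact (h2.continuousOn.inv₀ fun x hx => (wsum_shrink_pos hn hη hη' hx).ne').smul h1.continuousOn

lemma abs_push_sub_le {n : ℕ} (hn : 3 ≤ n) {η : ℝ} (hη : 0 ≤ η) (hη' : n * η ≤ 1 / 2)
    {x : EuclideanSpace ℝ (Fin (n - 1))} (hx : x ∈ deltaStar n) (i : Fin (n - 1)) :
    |push n η x i - x i| ≤ (n + 1) * η := by
  have hp := (push_mem hn hη hη' hx).1 i
  have hW := wsum_shrink_pos hn hη hη' hx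
  have hW1 := wsum_shrink_le (η := η) hn hx
  have hW2 := le_wsum_shrink (η := η) hn hx
  have hc := cut_le (t := coord n x 1) hη
  have h2 : n * cut η (coord n x 1) ≤ n * η := mul_le_mul_of_nonneg_left hc (Nat.cast_nonneg n)
  have h3 := shrink_le (η := η) hx i
  have h4 := le_shrink η x i
  have hs : shrink n η x i = push n η x i * wsum n (shrink n η x) := by
    rw [push_apply]; field_simp
  rw [abs_le]
  constructor <;> nlinarith

lemma dist_push_le {n : ℕ} (hn : 3 ≤ n) {η : ℝ} (hη : 0 ≤ η) (hη' : n * η ≤ 1 / 2)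
    {x : EuclideanSpace ℝ (Fin (n - 1))} (hx : x ∈ deltaStar n) :
    dist (push n η x) x ≤ n * ((n + 1) * η) := by
  have hB : 0 ≤ (n + 1) * η := by positivity
  rw [EuclideanSpace.dist_eq]
  refine Real.sqrt_le_iff.2 ⟨by positivity, ?_⟩
  calc ∑ i, dist (push n η x i) (x i) ^ 2 ≤ ∑ _i : Fin (n - 1), ((n + 1) * η) ^ 2 :=
        Finset.sum_le_sum fun i _ =>
          pow_le_pow_left₀ dist_nonneg (abs_push_sub_le hn hη hη' hx i) 2
    _ = (n - 1 : ℝ) * ((n + 1) * η) ^ 2 := by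
        simp [Nat.cast_sub (show 1 ≤ n by omega)]
    _ ≤ (n : ℝ) ^ 2 * ((n + 1) * η) ^ 2 := by
        refine mul_le_mul_of_nonneg_right ?_ (sq_nonneg _)
        nlinarith [sq_nonneg ((n : ℝ) - 1), (Nat.cast_nonneg n : (0 : ℝ) ≤ n)]
    _ = (n * ((n + 1) * η)) ^ 2 := by ring

/-! ### Distance to `Σ` and the first coordinate -/

/-- Moving the mass `x_1` to the last coordinate, whose weight is `2`, gives a point of `Σ`. -/
lemma exists_mem_sigmaFace_dist_le {n : ℕ} (hn : 3 ≤ n) {x : EuclideanSpace ℝ (Fin (n - 1))}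
    (hx : x ∈ deltaStar n) : ∃ y ∈ sigmaFace n, dist x y ≤ 2 * coord n x 1 := by
  have h0 : 0 < n - 1 := by omega
  let a : Fin (n - 1) := ⟨0, h0⟩
  let b : Fin (n - 1) := ⟨n - 1 - 1, by omega⟩
  have hab : a ≠ b := by
    intro h
    have := congrArg Fin.val h
    simp only [a, b] at this
    omega
  have hca : coord n x 1 = x a := coord_of_lt x (by omega)
  have hxa := (hx.1 a).1
  let d : EuclideanSpace ℝ (Fin (n - 1)) :=
    EuclideanSpace.single b (x a / 2) - EuclideanSpace.single a (x a)
  have hd : ∀ i, d i = (if i = b then x a / 2 else 0) - (if i = a then x a else 0) := by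
    intro i
    simp [d]
  refine ⟨x + d, mem_sigmaFace_iff.2 ⟨mem_deltaStar_iff.2 ⟨fun i => ?_, ?_⟩, ?_⟩, ?_⟩
  · have hi := (hx.1 i).1
    rw [PiLp.add_apply, hd]
    by_cases h : i = a
    · subst h
      simp [hab]
    · simp only [h, if_false]
      split_ifs <;> linarith
  · have h1 := (mem_deltaStar_iff.1 hx).2
    rw [wsum_eq hn] at h1 ⊢
    change _ + (x + d) b = 1
    change _ + x b = 1 at h1
    simp only [PiLp.add_apply, hd, Finset.sum_add_distrib, Finset.sum_sub_distrib,
      Finset.sum_ite_eq', Finset.mem_univ, if_true, hab.symm, if_false]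
    linarith
  · rw [coord_of_lt _ (by omega)]
    change (x + d) a = 0
    simp [hd, hab]
  · rw [dist_self_add_right, hca]
    refine (norm_sub_le _ _).trans ?_
    rw [PiLp.norm_single, PiLp.norm_single, Real.norm_of_nonneg hxa,
      Real.norm_of_nonneg (by linarith)]
    linarith

lemma infDist_sigmaFace_le {n : ℕ} (hn : 3 ≤ n) {x : EuclideanSpace ℝ (Fin (n - 1))}
    (hx : x ∈ deltaStar n) : Metric.infDist x (sigmaFace n) ≤ 2 * coord n x 1 := by
  obtain ⟨y, hy, h⟩ := exists_mem_sigmaFace_dist_le hn hx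
  exact (Metric.infDist_le_dist_of_mem hy).trans h

lemma coord_le_infDist_sigmaFace {n : ℕ} (hn : 3 ≤ n) {x : EuclideanSpace ℝ (Fin (n - 1))}
    (hx : x ∈ deltaStar n) : coord n x 1 ≤ Metric.infDist x (sigmaFace n) := by
  obtain ⟨y, hy, -⟩ := exists_mem_sigmaFace_dist_le hn hx
  refine (Metric.le_infDist ⟨y, hy⟩).2 fun {z} hz => ?_
  have hz0 := (mem_sigmaFace_iff.1 hz).2
  rw [coord_of_lt _ (by omega)] at hz0 ⊢
  have h := PiLp.norm_apply_le (x - z) (⟨1 - 1, by omega⟩ : Fin (n - 1))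
  rw [PiLp.sub_apply, hz0, sub_zero, ← dist_eq_norm] at h
  exact (le_abs_self _).trans h

/-! ### Invariance of the faces -/

lemma coord_push_eq {n : ℕ} (η : ℝ) {x : EuclideanSpace ℝ (Fin (n - 1))} {i j : ℕ}
    (hi : i - 1 < n - 1) (hj : j - 1 < n - 1) (h : coord n x i = coord n x j) :
    coord n (push n η x) i = coord n (push n η x) j := by
  rw [coord_of_lt x hi, coord_of_lt x hj] at h
  rw [coord_of_lt _ hi, coord_of_lt _ hj, push_apply, push_apply, shrink_apply, shrink_apply, h]

lemma push_mem_face {n : ℕ} (hn : 3 ≤ n) {η : ℝ} (hη : 0 ≤ η) (hη' : n * η ≤ 1 / 2)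
    {k : ℕ} {ι : Fin (k + 2) → ℕ} (hι : FaceIndices n k ι) {x : EuclideanSpace ℝ (Fin (n - 1))}
    (hx : x ∈ deltaStarFace n k ι) : push n η x ∈ deltaStarFace n k ι := by
  obtain ⟨hmono, h1, hlast⟩ := hι
  rcases h1.eq_or_lt with h | h
  · refine ⟨push_mem hn hη hη' hx.1, fun j m hm hm' => ?_, fun m hm hm' => by omega⟩
    have h2 : ι j.succ ≤ n := hlast ▸ hmono.monotone (Fin.le_last _)
    exact coord_push_eq η (by omega) (by omega) (hx.2.1 j m hm hm')
  · rw [push_eq_self hx.1]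
    · exact hx
    · rw [hx.2.2 1 le_rfl h, cut_zero]

/-- There are `C > 0`, positive `ε_j → 0` and continuous maps `Φ_j : Δ* → Δ*` such that for
every `j`: (1) `Φ_j = id` on `Δ* \ U(Σ, ε_j)`; (2) `Φ_j(U(Σ, ε_j/C)) ⊆ Σ`, `Φ_j|_Σ = id`,
and `|Φ_j - id|_{C⁰} ≤ C ε_j`; (3) `Φ_j(Δ*_k(i_1,…,i_{k+1})) ⊆ Δ*_k(i_1,…,i_{k+1})` for all
`0 ≤ k ≤ n-2` and `1 ≤ i_1 < ⋯ < i_{k+1} ≤ n-1`. -/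
theorem exists_pushing_maps (n : ℕ) (hn : 3 ≤ n) :
    ∃ (C : ℝ) (ε : ℕ → ℝ)
      (Φ : ℕ → EuclideanSpace ℝ (Fin (n - 1)) → EuclideanSpace ℝ (Fin (n - 1))),
      0 < C ∧ (∀ j, 0 < ε j) ∧ Filter.Tendsto ε Filter.atTop (nhds 0) ∧
      ∀ j : ℕ,
        ContinuousOn (Φ j) (deltaStar n) ∧
        Set.MapsTo (Φ j) (deltaStar n) (deltaStar n) ∧
        (∀ x ∈ deltaStar n \ deltaStarNbhd n (sigmaFace n) (ε j), Φ j x = x) ∧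
        (Φ j '' deltaStarNbhd n (sigmaFace n) (ε j / C) ⊆ sigmaFace n) ∧
        (∀ x ∈ sigmaFace n, Φ j x = x) ∧
        (∀ x ∈ deltaStar n, dist (Φ j x) x ≤ C * ε j) ∧
        ∀ (k : ℕ), k ≤ n - 2 → ∀ ι : Fin (k + 2) → ℕ, FaceIndices n k ι →
          Φ j '' deltaStarFace n k ι ⊆ deltaStarFace n k ι := by
  have hn' : (3 : ℝ) ≤ n := by exact_mod_cast hn
  -- The scale `η j = 1 / (2 n (j + 1))` satisfies `n * η j ≤ 1 / 2`, and `ε j = 4 * η j`.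
  set η : ℕ → ℝ := fun j => 1 / (2 * n) * (1 / ((j : ℝ) + 1)) with hηdef
  have hpos : ∀ j, 0 < η j := fun j => by simp only [hηdef]; positivity
  have hsmall : ∀ j, n * η j ≤ 1 / 2 := fun j => by
    have h1 : 1 / ((j : ℝ) + 1) ≤ 1 := by
      rw [div_le_one (by positivity)]
      linarith [(Nat.cast_nonneg j : (0 : ℝ) ≤ j)]
    have h2 : n * η j = 1 / 2 * (1 / ((j : ℝ) + 1)) := by
      simp only [hηdef]; field_simp
    rw [h2]; linarith
  refine ⟨n * (n + 1), fun j => 4 * η j, fun j => push n (η j), by positivity,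
    fun j => by linarith [hpos j], ?_, fun j => ?_⟩
  · have := (tendsto_one_div_add_atTop_nhds_zero_nat (𝕜 := ℝ)).const_mul (1 / (2 * (n : ℝ)))
    simpa only [mul_zero] using this.const_mul 4
  have hη := (hpos j).le
  have hη' := hsmall j
  refine ⟨continuousOn_push hn hη hη', fun x hx => push_mem hn hη hη' hx, ?_, ?_, ?_, ?_, ?_⟩
  · rintro x ⟨hx, hxU⟩
    refine push_eq_self hx (cut_of_ge (coord_mem hx 1) ?_)
    by_contra! h
    exact hxU ⟨hx, lt_of_le_of_lt (infDist_sigmaFace_le hn hx) (by linarith)⟩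
  · rintro _ ⟨x, ⟨hx, hxU⟩, rfl⟩
    refine push_mem_sigmaFace hn hη hη' hx ?_
    refine (coord_le_infDist_sigmaFace hn hx).trans (hxU.le.trans ?_)
    rw [div_le_iff₀ (by positivity)]
    change 4 * η j ≤ η j * (n * (n + 1))
    have : (4 : ℝ) ≤ n * (n + 1) := by nlinarith
    nlinarith [hpos j]
  · intro x hx
    obtain ⟨hx, h0⟩ := mem_sigmaFace_iff.1 hx
    exact push_eq_self hx (by rw [h0, cut_zero])
  · intro x hx
    refine (dist_push_le hn hη hη' hx).trans ?_
    have : 0 ≤ (n : ℝ) * ((n + 1) * η j) := by positivity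
    linarith
  · rintro k - ι hι _ ⟨x, hx, rfl⟩
    exact push_mem_face hn hη hη' hι hx
end
end

section
/- Let σ ⊆ ℝ^m be an ℓ-dimensional simplex with ℓ ≥ 1 (the convex hull of ℓ+1 affinely independent points), let σ_0 be a proper face of σ, and let ∂σ denote the relative boundary of σ. Let C > 0 and ε > 0, and suppose φ : ∂σ → ∂σ is a continuous map satisfying: φ(x) = x for all x ∈ ∂σ \ U(σ_0, ε); φ(U(σ_0, ε/C) ∩ ∂σ) ⊆ σ_0; φ(x) = x for all x ∈ σ_0; and sup_{x ∈ ∂σ} |φ(x) − x| ≤ C ε. Then there exist a constant C' ≥ C, depending only on σ and σ_0 (not on ε or φ), and a continuous map φ̃ : σ → σ such that φ̃ = φ on ∂σ, φ̃(x) = x for all x ∈ σ \ U(σ_0, ε), φ̃(U(σ_0, ε/C') ∩ σ) ⊆ σ_0, φ̃(x) = x for all x ∈ σ_0, and sup_{x ∈ σ} |φ̃(x) − x| ≤ C' ε. -/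
/-!
The extension is obtained from Tietze's theorem alone; no collar of `∂σ` is needed. A continuous
map from a closed subset of `ℝ^m` into a closed convex set `K` extends to all of `ℝ^m` with values
in `K`: extend into `ℝ^m`, then apply the nearest-point projection onto `K`. If moreover the given
map stays within distance `D` of a continuous reference map `ρ`, then so can the extension `g`:
replace `g - ρ` by its truncation to norm at most `D`, which only moves `g x` along the segment
towards `ρ x`. This is `exists_controlled_extension`.

It is applied twice, with `C' = C + 2`.
* On `∂σ ∩ {dist(·, σ₀) ≤ ε / C'}` the map `φ` takes values in `σ₀`. Extend it to a map `g` into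
  `σ₀`, with the nearest-point projection onto `σ₀` as reference map.
* The maps `φ` on `∂σ`, `g` on `σ ∩ {dist(·, σ₀) ≤ ε / C'}` and `id` on `σ \ U(σ₀, ε)` agree on
  overlaps, so they glue to a continuous map on a closed set. Extend it to a map into `σ`, with the
  identity as reference map.
-/

open Set

noncomputable section

/-- The Euclidean open `r`-neighborhood `U(V, r) = {x : dist(x, V) < r}` of a set `V` in
`ℝ^m`. -/
def nbhd {m : ℕ} (V : Set (EuclideanSpace ℝ (Fin m))) (r : ℝ) :
    Set (EuclideanSpace ℝ (Fin m)) :=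
  {x | Metric.infDist x V < r}

/-- The relative boundary `∂σ` of the simplex with (affinely independent) vertices
`v_0,…,v_ℓ`: the union of its proper faces. -/
def simplexBoundary {m ℓ : ℕ} (v : Fin (ℓ + 1) → EuclideanSpace ℝ (Fin m)) :
    Set (EuclideanSpace ℝ (Fin m)) :=
  ⋃ (t : Finset (Fin (ℓ + 1))) (_ : t.Nonempty) (_ : t ≠ Finset.univ),
    convexHull ℝ (v '' ↑t)

/-- The nearest-point projection onto a nonempty compact convex set. Continuity comes from
`‖P x - P y‖² ≤ ⟪x - y, P x - P y⟫`, the sum of the two variational inequalities. -/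
lemma exists_nearest_point_proj {E : Type*} [NormedAddCommGroup E] [InnerProductSpace ℝ E]
    {K : Set E} (hne : K.Nonempty) (hK : IsCompact K) (hconv : Convex ℝ K) :
    ∃ P : E → E, Continuous P ∧ (∀ x, P x ∈ K) ∧ (∀ x ∈ K, P x = x) ∧
      ∀ x, dist (P x) x = Metric.infDist x K := by
  choose P hPK hP using exists_norm_eq_iInf_of_complete_convex hne hK.isComplete hconv
  have hinner : ∀ x, ∀ w ∈ K, inner ℝ (x - P x) (w - P x) ≤ 0 := fun x =>
    (norm_eq_iInf_iff_real_inner_le_zero hconv (hPK x)).1 (hP x)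
  have hdist : ∀ x, dist (P x) x = Metric.infDist x K := by
    intro x
    rw [dist_comm, dist_eq_norm, hP x, Metric.infDist_eq_iInf]
    simp only [dist_eq_norm]
  refine ⟨P, ?_, hPK, ?_, hdist⟩
  · have hlip : LipschitzWith 1 P := by
      refine LipschitzWith.of_dist_le_mul fun x y => ?_
      have h1 := hinner x (P y) (hPK y)
      have h2 := hinner y (P x) (hPK x)
      have h3 : inner ℝ (P x - P y) (P x - P y) ≤ inner ℝ (x - y) (P x - P y) := by
        have e1 : inner ℝ (x - P x) (P y - P x) = - inner ℝ (x - P x) (P x - P y) := by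
          rw [← inner_neg_right, neg_sub]
        have e2 : x - y = (x - P x) - (y - P y) + (P x - P y) := by abel
        rw [e1] at h1
        rw [e2, inner_add_left, inner_sub_left (x - P x)]
        linarith
      have h4 := real_inner_le_norm (x - y) (P x - P y)
      rw [real_inner_self_eq_norm_mul_norm] at h3
      simp only [NNReal.coe_one, one_mul, dist_eq_norm]
      by_contra! hlt
      nlinarith [norm_nonneg (x - y), norm_nonneg (P x - P y)]
    exact hlip.continuous
  · intro x hx
    exact dist_eq_zero.1 ((hdist x).trans (Metric.infDist_zero_of_mem hx))

/-- Tietze extension into a compact convex set `K`, keeping the distance to a reference map `ρ`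
at most `D`. The extension takes values in `K` wherever `ρ` does. -/
lemma exists_controlled_extension {E : Type*} [NormedAddCommGroup E] [InnerProductSpace ℝ E]
    [FiniteDimensional ℝ E] {K A : Set E} (hne : K.Nonempty) (hK : IsCompact K)
    (hconv : Convex ℝ K) (hA : IsClosed A) {f ρ : E → E} (hf : ContinuousOn f A)
    (hfK : MapsTo f A K) (hρ : Continuous ρ) {D : ℝ} (hD : 0 < D)
    (hfρ : ∀ x ∈ A, dist (f x) (ρ x) ≤ D) :
    ∃ g : E → E, Continuous g ∧ EqOn g f A ∧ (∀ x, ρ x ∈ K → g x ∈ K) ∧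
      ∀ x, dist (g x) (ρ x) ≤ D := by
  obtain ⟨P, hPc, hPK, hPid, -⟩ := exists_nearest_point_proj hne hK hconv
  obtain ⟨h, hh⟩ := ContinuousMap.exists_restrict_eq hA
    (⟨A.domRestrict f, hf.domRestrict⟩ : C(A, E))
  have hhA : ∀ x ∈ A, h x = f x := fun x hx => congrArg (fun k : C(A, E) => k ⟨x, hx⟩) hh
  -- `c x • (P (h x) - ρ x)` is the truncation of `P (h x) - ρ x` to norm at most `D`
  set c : E → ℝ := fun x => D / max D ‖P (h x) - ρ x‖ with hc
  have hpos : ∀ x, 0 < max D ‖P (h x) - ρ x‖ := fun x => lt_max_of_lt_left hD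
  have hcc : Continuous c :=
    continuous_const.div (by fun_prop) fun x => (hpos x).ne'
  refine ⟨fun x => ρ x + c x • (P (h x) - ρ x), by fun_prop, ?_, ?_, ?_⟩
  · intro x hx
    have e : P (h x) = f x := by rw [hhA x hx, hPid _ (hfK hx)]
    have hle : ‖P (h x) - ρ x‖ ≤ D := by
      rw [e, ← dist_eq_norm]; exact hfρ x hx
    have hc1 : c x = 1 := by
      simp only [hc, max_eq_left hle, div_self hD.ne']
    simp only [hc1, one_smul, e, add_sub_cancel]
  · intro x hx
    exact hconv.add_smul_sub_mem hx (hPK _)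
      ⟨(div_pos hD (hpos x)).le, (div_le_one (hpos x)).2 (le_max_left _ _)⟩
  · intro x
    have hcx : 0 ≤ c x := (div_pos hD (hpos x)).le
    rw [dist_eq_norm, add_sub_cancel_left, norm_smul, Real.norm_of_nonneg hcx]
    calc c x * ‖P (h x) - ρ x‖ ≤ c x * max D ‖P (h x) - ρ x‖ := by
          gcongr; exact le_max_right _ _
      _ = D := div_mul_cancel₀ _ (hpos x).ne'

lemma isClosed_simplexBoundary {m ℓ : ℕ} (v : Fin (ℓ + 1) → EuclideanSpace ℝ (Fin m)) :
    IsClosed (simplexBoundary v) := by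
  unfold simplexBoundary
  refine isClosed_iUnion_of_finite fun t => isClosed_iUnion_of_finite fun _ =>
    isClosed_iUnion_of_finite fun _ => ?_
  exact (t.finite_toSet.image v).isClosed_convexHull ℝ

lemma simplexBoundary_subset {m ℓ : ℕ} (v : Fin (ℓ + 1) → EuclideanSpace ℝ (Fin m)) :
    simplexBoundary v ⊆ convexHull ℝ (range v) := by
  unfold simplexBoundary
  exact iUnion_subset fun t => iUnion_subset fun _ => iUnion_subset fun _ =>
    convexHull_mono (image_subset_range _ _)

/-- Let `σ ⊆ ℝ^m` be an `ℓ`-simplex, `ℓ ≥ 1`, with vertices `v`, and `σ₀` a proper face of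
`σ`. Let `C > 0`. Then there is `C' ≥ C`, depending only on `σ`, `σ₀` (and `C`) but not on
`ε` or `φ`, such that: for every `ε > 0` and every continuous `φ : ∂σ → ∂σ` with `φ = id` on
`∂σ \ U(σ₀, ε)`, `φ(U(σ₀, ε/C) ∩ ∂σ) ⊆ σ₀`, `φ = id` on `σ₀` and `sup |φ - id| ≤ C ε`,
there is a continuous `φ̃ : σ → σ` with `φ̃ = φ` on `∂σ`, `φ̃ = id` on `σ \ U(σ₀, ε)`,
`φ̃(U(σ₀, ε/C') ∩ σ) ⊆ σ₀`, `φ̃ = id` on `σ₀` and `sup |φ̃ - id| ≤ C' ε`. -/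
theorem extend_pushing_map (m ℓ : ℕ) (hℓ : 1 ≤ ℓ)
    (v : Fin (ℓ + 1) → EuclideanSpace ℝ (Fin m)) (hv : AffineIndependent ℝ v)
    (t : Finset (Fin (ℓ + 1))) (ht : t.Nonempty) (ht' : t ≠ Finset.univ)
    (C : ℝ) (hC : 0 < C) :
    ∃ C' : ℝ, C ≤ C' ∧
      ∀ ε : ℝ, 0 < ε →
        ∀ φ : EuclideanSpace ℝ (Fin m) → EuclideanSpace ℝ (Fin m),
          ContinuousOn φ (simplexBoundary v) →
          Set.MapsTo φ (simplexBoundary v) (simplexBoundary v) →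
          (∀ x ∈ simplexBoundary v \ nbhd (convexHull ℝ (v '' ↑t)) ε, φ x = x) →
          φ '' (nbhd (convexHull ℝ (v '' ↑t)) (ε / C) ∩ simplexBoundary v) ⊆
            convexHull ℝ (v '' ↑t) →
          (∀ x ∈ convexHull ℝ (v '' ↑t), φ x = x) →
          (∀ x ∈ simplexBoundary v, dist (φ x) x ≤ C * ε) →
          ∃ φt : EuclideanSpace ℝ (Fin m) → EuclideanSpace ℝ (Fin m),
            ContinuousOn φt (convexHull ℝ (Set.range v)) ∧
            Set.MapsTo φt (convexHull ℝ (Set.range v)) (convexHull ℝ (Set.range v)) ∧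
            Set.EqOn φt φ (simplexBoundary v) ∧
            (∀ x ∈ convexHull ℝ (Set.range v) \ nbhd (convexHull ℝ (v '' ↑t)) ε,
              φt x = x) ∧
            φt '' (nbhd (convexHull ℝ (v '' ↑t)) (ε / C') ∩ convexHull ℝ (Set.range v)) ⊆
              convexHull ℝ (v '' ↑t) ∧
            (∀ x ∈ convexHull ℝ (v '' ↑t), φt x = x) ∧
            (∀ x ∈ convexHull ℝ (Set.range v), dist (φt x) x ≤ C' * ε) := by
  have hne₀ : (convexHull ℝ (v '' ↑t)).Nonempty := (ht.to_set.image v).convexHull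
  have hK₀ : IsCompact (convexHull ℝ (v '' ↑t)) :=
    (t.finite_toSet.image v).isCompact_convexHull ℝ
  have hK : IsCompact (convexHull ℝ (range v)) := (finite_range v).isCompact_convexHull ℝ
  have hsub₀ : convexHull ℝ (v '' ↑t) ⊆ simplexBoundary v := by
    unfold simplexBoundary
    exact subset_iUnion_of_subset t (subset_iUnion_of_subset ht (subset_iUnion_of_subset ht' le_rfl))
  have hsub := simplexBoundary_subset v
  have hbd := isClosed_simplexBoundary v
  have hconv₀ := convex_convexHull ℝ (v '' ↑t)
  have hconv := convex_convexHull ℝ (range v)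
  refine ⟨C + 2, by linarith, fun ε hε φ hφc hφm hφid hφpush hφ₀ hφd => ?_⟩
  unfold nbhd at *
  generalize convexHull ℝ (v '' ↑t) = σ₀ at *
  generalize convexHull ℝ (range v) = σ at *
  generalize simplexBoundary v = S at *
  have hneσ : σ.Nonempty := hne₀.mono (hsub₀.trans hsub)
  have hδ : 0 < ε / (C + 2) := by positivity
  have hδC : ε / (C + 2) < ε / C := by gcongr; linarith
  have hδε : ε / (C + 2) < ε := div_lt_self hε (by linarith)
  set δ := ε / (C + 2)
  have hcont : Continuous fun x => Metric.infDist x σ₀ := Metric.continuous_infDist_pt σ₀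
  have hN : IsClosed {x | Metric.infDist x σ₀ ≤ δ} := isClosed_le hcont continuous_const
  have hO : IsClosed {x | ε ≤ Metric.infDist x σ₀} := isClosed_le continuous_const hcont
  obtain ⟨P, hPc, hPK, -, hPd⟩ := exists_nearest_point_proj hne₀ hK₀ hconv₀
  obtain ⟨g, hgc, hgφ, hgK, hgd⟩ :=
    exists_controlled_extension (A := S ∩ {x | Metric.infDist x σ₀ ≤ δ}) (f := φ) (ρ := P)
      (D := (C + 1) * ε) hne₀ hK₀ hconv₀ (hbd.inter hN) (hφc.mono inter_subset_left)
      (fun x hx => hφpush ⟨x, ⟨lt_of_le_of_lt hx.2 hδC, hx.1⟩, rfl⟩) hPc (by positivity)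
      (fun x hx => by
        have h1 := dist_triangle_right (φ x) (P x) x
        have h2 := hφd x hx.1
        have h3 : Metric.infDist x σ₀ ≤ δ := hx.2
        rw [hPd] at h1
        linarith)
  classical
  let G : EuclideanSpace ℝ (Fin m) → EuclideanSpace ℝ (Fin m) := fun x =>
    if x ∈ S then φ x else if Metric.infDist x σ₀ ≤ δ then g x else x
  have hG1 : EqOn G φ S := fun x hx => if_pos hx
  have hG2 : EqOn G g (σ ∩ {x | Metric.infDist x σ₀ ≤ δ}) := by
    intro x hx
    by_cases hxS : x ∈ S
    · rw [hG1 hxS, hgφ ⟨hxS, hx.2⟩]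
    · exact (if_neg hxS).trans (if_pos hx.2)
  have hG3 : EqOn G id (σ ∩ {x | ε ≤ Metric.infDist x σ₀}) := by
    intro x hx
    by_cases hxS : x ∈ S
    · rw [hG1 hxS]
      exact hφid x ⟨hxS, (show ε ≤ Metric.infDist x σ₀ from hx.2).not_gt⟩
    · exact (if_neg hxS).trans (if_neg (not_le.2 (hδε.trans_le hx.2)))
  have hB2 := hK.isClosed.inter hN
  have hB3 := hK.isClosed.inter hO
  have hGc : ContinuousOn G ((S ∪ σ ∩ {x | Metric.infDist x σ₀ ≤ δ}) ∪
      σ ∩ {x | ε ≤ Metric.infDist x σ₀}) :=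
    ((hφc.congr hG1).union_of_isClosed (hgc.continuousOn.congr hG2) hbd hB2).union_of_isClosed
      (continuousOn_id.congr hG3) (hbd.union hB2) hB3
  obtain ⟨F, hFc, hFG, hFK, hFd⟩ :=
    exists_controlled_extension (f := G) (ρ := id) (D := (C + 2) * ε) hneσ hK hconv
      ((hbd.union hB2).union hB3) hGc
      (by
        rintro x ((hx | hx) | hx)
        · rw [hG1 hx]; exact hsub (hφm hx)
        · rw [hG2 hx]; exact hsub (hsub₀ (hgK x (hPK x)))
        · rw [hG3 hx]; exact hx.1)
      continuous_id (by positivity)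
      (by
        rintro x ((hx | hx) | hx)
        · rw [hG1 hx]
          have := hφd x hx
          simp only [id]
          linarith
        · rw [hG2 hx]
          have h1 := dist_triangle (g x) (P x) x
          have h2 := hgd x
          have h3 : Metric.infDist x σ₀ ≤ δ := hx.2
          rw [hPd] at h1
          simp only [id]
          linarith
        · rw [hG3 hx, dist_self]; positivity)
  have hFS : EqOn F φ S := fun x hx => (hFG (Or.inl (Or.inl hx))).trans (hG1 hx)
  refine ⟨F, hFc.continuousOn, fun x hx => hFK x hx, hFS, ?_, ?_, ?_, fun x _ => hFd x⟩
  · intro x hx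
    have hx' : x ∈ σ ∩ {x | ε ≤ Metric.infDist x σ₀} :=
      ⟨hx.1, le_of_not_gt (show ¬Metric.infDist x σ₀ < ε from hx.2)⟩
    exact (hFG (Or.inr hx')).trans (hG3 hx')
  · rintro _ ⟨x, hx, rfl⟩
    have hx' : x ∈ σ ∩ {x | Metric.infDist x σ₀ ≤ δ} := ⟨hx.2, (show Metric.infDist x σ₀ < δ from hx.1).le⟩
    rw [hFG (Or.inl (Or.inr hx')), hG2 hx']
    exact hgK x (hPK x)
  · intro x hx
    rw [hFS (hsub₀ hx), hφ₀ x hx]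
end
end
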